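/- Under the one-cluster model with finite fourth moments, for all j, k ∈ {1, …, n}: E[(v + ε_j)(v + ε_k)² w] = τ² η^{-1} [ τ² (3 − κ_v) + σ_j² (κ_ε − 3) · 1{j = k} ], where w = (Σ_{h=1}^n λ_h − 1) v + Σ_{h=1}^n λ_h ε_h. -/

import Mathlib

open MeasureTheory ProbabilityTheory

/-!
The variables `v, ε_1, …, ε_n` are independent, so the joint fourth cumulant of linear combinations
of them is diagonal: only the fourth cumulants of the single variables survive. The prediction error
`w` is uncorrelated with every observation `v + ε_j`; hence the three products of covariances that
separate the fourth moment of `v + ε_j`, `v + ε_k`, `v + ε_k`, `w` from their joint cumulant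
all vanish. What is left is `-η⁻¹ (κ_v - 3) τ⁴` from `v` and, if `j = k`,
`λ_j (κ_ε - 3) σ_j⁴` from `ε_j`.
-/

section JointCumulant

variable {Ω : Type*} [MeasurableSpace Ω] {μ : Measure Ω} {X Y Z W : Ω → ℝ}

/-- The joint fourth cumulant of four real random variables, written through their covariances and
their fourth central moment. It is meaningful only if the products involved are integrable, for
instance for variables in `L⁴`. -/
noncomputable def jointCumulant₄ (X Y Z W : Ω → ℝ) (μ : Measure Ω) : ℝ :=
  ∫ ω, (X ω - μ[X]) * (Y ω - μ[Y]) * (Z ω - μ[Z]) * (W ω - μ[W]) ∂μ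
    - cov[X, Y; μ] * cov[Z, W; μ] - cov[X, Z; μ] * cov[Y, W; μ] - cov[X, W; μ] * cov[Y, Z; μ]

lemma jointCumulant₄_swap (X Y Z W : Ω → ℝ) :
    jointCumulant₄ X Y Z W μ = jointCumulant₄ Y X Z W μ := by
  simp only [jointCumulant₄, covariance_comm Y X, mul_comm (Y _ - _) (X _ - _)]
  ring

lemma jointCumulant₄_rotate (X Y Z W : Ω → ℝ) :
    jointCumulant₄ X Y Z W μ = jointCumulant₄ Y Z W X μ := by
  have reorder (ω : Ω) : (X ω - μ[X]) * (Y ω - μ[Y]) * (Z ω - μ[Z]) * (W ω - μ[W])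
      = (Y ω - μ[Y]) * (Z ω - μ[Z]) * (W ω - μ[W]) * (X ω - μ[X]) := by ring
  simp only [jointCumulant₄, reorder, covariance_comm X]
  ring

lemma jointCumulant₄_self_of_moments {σsq κ : ℝ} (hX : AEMeasurable X μ) (hX0 : μ[X] = 0)
    (hX2 : ∫ ω, X ω ^ 2 ∂μ = σsq) (hX4 : ∫ ω, X ω ^ 4 ∂μ = κ * σsq ^ 2) :
    jointCumulant₄ X X X X μ = (κ - 3) * σsq ^ 2 := by
  have pow_four (ω : Ω) : X ω * X ω * X ω * X ω = X ω ^ 4 := by ring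
  simp only [jointCumulant₄, covariance_self hX, variance_of_integral_eq_zero hX hX0, hX0, sub_zero,
    pow_four, hX2, hX4]
  ring

lemma integral_mul_eq_jointCumulant₄_of_covariance_eq_zero (hX0 : μ[X] = 0) (hY0 : μ[Y] = 0)
    (hZ0 : μ[Z] = 0) (hW0 : μ[W] = 0) (hXW : cov[X, W; μ] = 0) (hYW : cov[Y, W; μ] = 0)
    (hZW : cov[Z, W; μ] = 0) :
    ∫ ω, X ω * Y ω * Z ω * W ω ∂μ = jointCumulant₄ X Y Z W μ := by
  simp only [jointCumulant₄, hX0, hY0, hZ0, hW0, hXW, hYW, hZW, sub_zero, mul_zero, zero_mul]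

lemma integrable_mul_mul_mul_of_memLp_four (hX : MemLp X 4 μ) (hY : MemLp Y 4 μ)
    (hZ : MemLp Z 4 μ) (hW : MemLp W 4 μ) :
    Integrable (fun ω ↦ X ω * Y ω * Z ω * W ω) μ := by
  have : ENNReal.HolderTriple 4 4 2 := ⟨by
    rw [← ENNReal.toReal_eq_toReal_iff' (by simp) (by simp),
      ENNReal.toReal_add (by simp) (by simp)]
    norm_num⟩
  have hXY : MemLp (X * Y) 2 μ := hY.mul hX
  have hZW : MemLp (Z * W) 2 μ := hW.mul hZ
  simpa only [Pi.mul_apply, ← mul_assoc] using! hXY.integrable_mul hZW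

section Linear

variable {ι : Type*} [Fintype ι] {X : ι → Ω → ℝ}

lemma memLp_sum_smul {p : ENNReal} (hX : ∀ i, MemLp (X i) p μ) (q : ι → ℝ) :
    MemLp (∑ i, q i • X i) p μ :=
  memLp_finsetSum' _ fun i _ ↦ (hX i).const_smul (q i)

lemma integral_sum_smul (hX : ∀ i, Integrable (X i) μ) (q : ι → ℝ) :
    μ[∑ i, q i • X i] = ∑ i, q i * μ[X i] := by
  simp only [Finset.sum_apply, Pi.smul_apply, smul_eq_mul]
  rw [integral_finsetSum _ fun i _ ↦ (hX i).const_mul _]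
  simp only [integral_const_mul]

variable [IsFiniteMeasure μ]

lemma covariance_sum_smul_left (hX : ∀ i, MemLp (X i) 2 μ) (hY : MemLp Y 2 μ) (q : ι → ℝ) :
    cov[∑ i, q i • X i, Y; μ] = ∑ i, q i * cov[X i, Y; μ] := by
  simp only [covariance_sum_left (fun i ↦ (hX i).const_smul (q i)) hY, covariance_smul_left]

lemma covariance_sum_smul_of_pairwise_eq_zero (hX : ∀ i, MemLp (X i) 2 μ)
    (h : Pairwise fun i j ↦ cov[X i, X j; μ] = 0) (p q : ι → ℝ) :
    cov[∑ i, p i • X i, ∑ i, q i • X i; μ] = ∑ i, p i * (q i * Var[X i; μ]) := by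
  rw [covariance_sum_smul_left hX (memLp_sum_smul hX q)]
  congr! 2 with i
  rw [covariance_comm, covariance_sum_smul_left hX (hX i),
    Fintype.sum_eq_single i fun j hj ↦ by rw [h hj, mul_zero], covariance_self (hX i).aemeasurable]

lemma jointCumulant₄_sum_smul_left (hX : ∀ i, MemLp (X i) 4 μ) (hY : MemLp Y 4 μ)
    (hZ : MemLp Z 4 μ) (hW : MemLp W 4 μ) (q : ι → ℝ) :
    jointCumulant₄ (∑ i, q i • X i) Y Z W μ = ∑ i, q i * jointCumulant₄ (X i) Y Z W μ := by
  have memLp_two {T : Ω → ℝ} (hT : MemLp T 4 μ) : MemLp T 2 μ := hT.mono_exponent (by norm_num)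
  have cov_left {T : Ω → ℝ} (hT : MemLp T 4 μ) :=
    covariance_sum_smul_left (fun i ↦ memLp_two (hX i)) (memLp_two hT) q
  have centered {T : Ω → ℝ} (hT : MemLp T 4 μ) : MemLp (fun ω ↦ T ω - μ[T]) 4 μ :=
    hT.sub (memLp_const _)
  have expand (ω : Ω) : ((∑ i, q i • X i) ω - μ[∑ i, q i • X i])
        * (Y ω - μ[Y]) * (Z ω - μ[Z]) * (W ω - μ[W])
      = ∑ i, q i * ((X i ω - μ[X i]) * (Y ω - μ[Y]) * (Z ω - μ[Z]) * (W ω - μ[W])) := by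
    rw [integral_sum_smul fun i ↦ (hX i).integrable (by norm_num)]
    simp only [Finset.sum_apply, Pi.smul_apply, smul_eq_mul, ← Finset.sum_sub_distrib, ← mul_sub,
      Finset.sum_mul, ← mul_assoc]
  simp only [jointCumulant₄, expand, cov_left hY, cov_left hZ, cov_left hW]
  rw [integral_finsetSum _ fun i _ ↦ (integrable_mul_mul_mul_of_memLp_four (centered (hX i))
    (centered hY) (centered hZ) (centered hW)).const_mul _]
  simp only [integral_const_mul, Finset.sum_mul, ← Finset.sum_sub_distrib]
  congr! 1 with i
  ring

lemma jointCumulant₄_sum_smul (hX : ∀ i, MemLp (X i) 4 μ) (p q r t : ι → ℝ) :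
    jointCumulant₄ (∑ i, p i • X i) (∑ i, q i • X i) (∑ i, r i • X i) (∑ i, t i • X i) μ
      = ∑ a, p a * ∑ b, q b * ∑ c, r c * ∑ d, t d * jointCumulant₄ (X a) (X b) (X c) (X d) μ := by
  have hL := memLp_sum_smul hX
  rw [jointCumulant₄_sum_smul_left hX (hL q) (hL r) (hL t)]
  congr! 3 with a
  rw [jointCumulant₄_rotate, jointCumulant₄_sum_smul_left hX (hL r) (hL t) (hX a)]
  congr! 3 with b
  rw [jointCumulant₄_rotate, jointCumulant₄_sum_smul_left hX (hL t) (hX a) (hX b)]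
  congr! 3 with c
  rw [jointCumulant₄_rotate, jointCumulant₄_sum_smul_left hX (hX a) (hX b) (hX c)]
  congr! 2 with d
  exact jointCumulant₄_rotate ..

end Linear

section Independence

lemma jointCumulant₄_eq_zero_of_indepFun_prodMk₃ [IsProbabilityMeasure μ] (hX : MemLp X 2 μ)
    (hY : MemLp Y 2 μ) (hZ : MemLp Z 2 μ) (hW : MemLp W 2 μ)
    (h : IndepFun X (fun ω ↦ (Y ω, Z ω, W ω)) μ) :
    jointCumulant₄ X Y Z W μ = 0 := by
  have hXY : cov[X, Y; μ] = 0 :=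
    (h.comp measurable_id measurable_fst).covariance_eq_zero hX hY
  have hXZ : cov[X, Z; μ] = 0 :=
    (h.comp measurable_id (measurable_fst.comp measurable_snd)).covariance_eq_zero hX hZ
  have hXW : cov[X, W; μ] = 0 :=
    (h.comp measurable_id (measurable_snd.comp measurable_snd)).covariance_eq_zero hX hW
  have centered_integral : ∫ ω, (X ω - μ[X]) ∂μ = 0 := by
    simp [integral_sub (hX.integrable one_le_two) (integrable_const _)]
  have factor : ∫ ω, (X ω - μ[X]) * ((Y ω - μ[Y]) * (Z ω - μ[Z]) * (W ω - μ[W])) ∂μ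
      = (∫ ω, (X ω - μ[X]) ∂μ) * ∫ ω, (Y ω - μ[Y]) * (Z ω - μ[Z]) * (W ω - μ[W]) ∂μ :=
    h.integral_comp_mul_comp (f := fun x ↦ x - μ[X])
      (g := fun p ↦ (p.1 - μ[Y]) * (p.2.1 - μ[Z]) * (p.2.2 - μ[W])) hX.aemeasurable
      (hY.aemeasurable.prodMk (hZ.aemeasurable.prodMk hW.aemeasurable))
      (by fun_prop) (by fun_prop)
  rw [centered_integral, zero_mul] at factor
  simp only [jointCumulant₄, hXY, hXZ, hXW, mul_assoc] at factor ⊢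
  rw [factor]
  ring

lemma jointCumulant₄_eq_zero_of_indepFun_prodMk_prodMk (hX : MemLp X 2 μ) (hY : MemLp Y 2 μ)
    (hZ : MemLp Z 2 μ) (hW : MemLp W 2 μ)
    (h : IndepFun (fun ω ↦ (X ω, Y ω)) (fun ω ↦ (Z ω, W ω)) μ) :
    jointCumulant₄ X Y Z W μ = 0 := by
  have hXZ : cov[X, Z; μ] = 0 := (h.comp measurable_fst measurable_fst).covariance_eq_zero hX hZ
  have hXW : cov[X, W; μ] = 0 := (h.comp measurable_fst measurable_snd).covariance_eq_zero hX hW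
  have factor : ∫ ω, (X ω - μ[X]) * (Y ω - μ[Y]) * ((Z ω - μ[Z]) * (W ω - μ[W])) ∂μ
      = cov[X, Y; μ] * cov[Z, W; μ] :=
    h.integral_comp_mul_comp (f := fun p ↦ (p.1 - μ[X]) * (p.2 - μ[Y]))
      (g := fun p ↦ (p.1 - μ[Z]) * (p.2 - μ[W])) (hX.aemeasurable.prodMk hY.aemeasurable)
      (hZ.aemeasurable.prodMk hW.aemeasurable) (by fun_prop) (by fun_prop)
  simp only [jointCumulant₄, hXZ, hXW, mul_assoc] at factor ⊢
  rw [factor]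
  ring

variable {ι : Type*} {X : ι → Ω → ℝ}

lemma iIndepFun_indepFun_prodMk₃ (h : iIndepFun X μ) (hX : ∀ i, AEMeasurable (X i) μ)
    {a b c d : ι} (hab : a ≠ b) (hac : a ≠ c) (had : a ≠ d) :
    IndepFun (X a) (fun ω ↦ (X b ω, X c ω, X d ω)) μ := by
  classical
  have hdisj : Disjoint ({a} : Finset ι) {b, c, d} := by simp [hab, hac, had]
  exact (h.indepFun_finset₀ {a} {b, c, d} hdisj hX).comp
    (φ := fun x : ({a} : Finset ι) → ℝ ↦ x ⟨a, by simp⟩)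
    (ψ := fun x : ({b, c, d} : Finset ι) → ℝ ↦
      (x ⟨b, by simp⟩, x ⟨c, by simp⟩, x ⟨d, by simp⟩))
    (by fun_prop) (by fun_prop)

lemma jointCumulant₄_eq_zero_of_iIndepFun (h : iIndepFun X μ) (hX : ∀ i, MemLp (X i) 2 μ)
    {a b c d : ι} (hne : ¬(a = b ∧ a = c ∧ a = d)) :
    jointCumulant₄ (X a) (X b) (X c) (X d) μ = 0 := by
  have := h.isProbabilityMeasure
  have hm i := (hX i).aemeasurable
  have singleton {a b c d : ι} (hab : a ≠ b) (hac : a ≠ c) (had : a ≠ d) :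
      jointCumulant₄ (X a) (X b) (X c) (X d) μ = 0 :=
    jointCumulant₄_eq_zero_of_indepFun_prodMk₃ (hX a) (hX b) (hX c) (hX d)
      (iIndepFun_indepFun_prodMk₃ h hm hab hac had)
  have pairs {a b : ι} (hab : a ≠ b) : jointCumulant₄ (X a) (X a) (X b) (X b) μ = 0 :=
    jointCumulant₄_eq_zero_of_indepFun_prodMk_prodMk (hX a) (hX a) (hX b) (hX b)
      (h.indepFun_prodMk_prodMk₀ hm a a b b hab hab hab hab)
  -- Either one index occurs only once, or the four indices form two distinct pairs.
  obtain ⟨hab, hac, had⟩ | ⟨hbc, hbd, hba⟩ | ⟨hcd, hca, hcb⟩ | ⟨hda, hdb, hdc⟩ |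
      ⟨rfl, rfl, hac⟩ | ⟨rfl, rfl, hab⟩ | ⟨rfl, rfl, hab⟩ :
      (a ≠ b ∧ a ≠ c ∧ a ≠ d) ∨ (b ≠ c ∧ b ≠ d ∧ b ≠ a) ∨ (c ≠ d ∧ c ≠ a ∧ c ≠ b) ∨
      (d ≠ a ∧ d ≠ b ∧ d ≠ c) ∨ (a = b ∧ c = d ∧ a ≠ c) ∨ (a = c ∧ b = d ∧ a ≠ b) ∨
      (a = d ∧ b = c ∧ a ≠ b) := by
    grind
  · exact singleton hab hac had
  · rw [jointCumulant₄_rotate, singleton hbc hbd hba]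
  · rw [jointCumulant₄_rotate, jointCumulant₄_rotate, singleton hcd hca hcb]
  · rw [← jointCumulant₄_rotate, singleton hda hdb hdc]
  · exact pairs hac
  · rw [jointCumulant₄_rotate, jointCumulant₄_swap, jointCumulant₄_rotate, pairs hab.symm]
  · rw [← jointCumulant₄_rotate, pairs hab]

lemma jointCumulant₄_sum_smul_of_iIndepFun [Fintype ι] (h : iIndepFun X μ)
    (hX : ∀ i, MemLp (X i) 4 μ) (p q r t : ι → ℝ) :
    jointCumulant₄ (∑ i, p i • X i) (∑ i, q i • X i) (∑ i, r i • X i) (∑ i, t i • X i) μ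
      = ∑ i, p i * (q i * (r i * (t i * jointCumulant₄ (X i) (X i) (X i) (X i) μ))) := by
  have := h.isProbabilityMeasure
  have zero {a b c d : ι} (hne : ¬(a = b ∧ a = c ∧ a = d)) :
      jointCumulant₄ (X a) (X b) (X c) (X d) μ = 0 :=
    jointCumulant₄_eq_zero_of_iIndepFun h (fun i ↦ (hX i).mono_exponent (by norm_num)) hne
  rw [jointCumulant₄_sum_smul hX]
  congr! 2 with a
  rw [Fintype.sum_eq_single a fun b hb ↦ by simp [zero (fun h ↦ hb h.1.symm)],
    Fintype.sum_eq_single a fun c hc ↦ by simp [zero (fun h ↦ hc h.2.1.symm)],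
    Fintype.sum_eq_single a fun d hd ↦ by simp [zero (fun h ↦ hd h.2.2.symm)]]

end Independence

end JointCumulant

section Cluster

variable {ι : Type*}

/-- The coefficients of the observation `v + ε_j` over the family `Option.elim · v ε` that lists the
cluster effect `v` (index `none`) and the errors `ε_h` (index `some h`). -/
def obsCoeff [DecidableEq ι] (j : ι) (i : Option ι) : ℝ :=
  i.elim 1 (Pi.single j 1)

lemma sum_obsCoeff_smul [Fintype ι] [DecidableEq ι] {M : Type*} [AddCommMonoid M] [Module ℝ M]
    (j : ι) (F : Option ι → M) : ∑ i, obsCoeff j i • F i = F none + F (some j) := by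
  simp [obsCoeff, Fintype.sum_option, Pi.single_apply, ite_smul]

lemma one_add_mul_sum_inv_pos [Fintype ι] {τsq : ℝ} {s : ι → ℝ} (hτ : 0 ≤ τsq)
    (hs : ∀ j, 0 ≤ s j) : 0 < 1 + τsq * ∑ h, (s h)⁻¹ := by
  have hsum : 0 ≤ ∑ h, (s h)⁻¹ := Finset.sum_nonneg fun h _ ↦ inv_nonneg.2 (hs h)
  positivity

lemma sum_shrinkage_sub_one [Fintype ι] {τsq η : ℝ} {s : ι → ℝ}
    (hη : η = 1 + τsq * ∑ h, (s h)⁻¹) (hη0 : η ≠ 0) :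
    ∑ h, τsq * (s h)⁻¹ * η⁻¹ - 1 = -η⁻¹ := by
  rw [← Finset.sum_mul, ← Finset.mul_sum, ← sub_eq_iff_eq_add'.2 hη]
  field_simp
  ring

variable [Fintype ι] [DecidableEq ι] {Ω : Type*} [MeasurableSpace Ω] {μ : Measure Ω}

lemma integral_obs_mul_obs_mul_obs_mul_sum_smul {X : Option ι → Ω → ℝ} (hindep : iIndepFun X μ)
    (hX : ∀ i, MemLp (X i) 4 μ) (hX0 : ∀ i, μ[X i] = 0) {q : Option ι → ℝ}
    (hq : ∀ j, q none * Var[X none; μ] + q (some j) * Var[X (some j); μ] = 0) (j k l : ι) :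
    ∫ ω, (X none ω + X (some j) ω) * (X none ω + X (some k) ω) * (X none ω + X (some l) ω)
        * (∑ i, q i • X i) ω ∂μ
      = q none * jointCumulant₄ (X none) (X none) (X none) (X none) μ
        + if j = k ∧ j = l then
            q (some j) * jointCumulant₄ (X (some j)) (X (some j)) (X (some j)) (X (some j)) μ
          else 0 := by
  have := hindep.isProbabilityMeasure
  have hX2 i : MemLp (X i) 2 μ := (hX i).mono_exponent (by norm_num)
  have centered (p : Option ι → ℝ) : μ[∑ i, p i • X i] = 0 := by
    simp only [integral_sum_smul fun i ↦ (hX2 i).integrable one_le_two, hX0, mul_zero,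
      Finset.sum_const_zero]
  have pairwise_uncorrelated : Pairwise fun i i' ↦ cov[X i, X i'; μ] = 0 :=
    fun i i' hi ↦ (hindep.indepFun hi).covariance_eq_zero (hX2 i) (hX2 i')
  have obs_uncorrelated (m : ι) : cov[∑ i, obsCoeff m i • X i, ∑ i, q i • X i; μ] = 0 := by
    rw [covariance_sum_smul_of_pairwise_eq_zero hX2 pairwise_uncorrelated]
    exact (sum_obsCoeff_smul m _).trans (hq m)
  have moment := integral_mul_eq_jointCumulant₄_of_covariance_eq_zero
    (centered (obsCoeff j)) (centered (obsCoeff k)) (centered (obsCoeff l)) (centered q)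
    (obs_uncorrelated j) (obs_uncorrelated k) (obs_uncorrelated l)
  rw [jointCumulant₄_sum_smul_of_iIndepFun hindep hX] at moment
  simp only [sum_obsCoeff_smul, ← smul_eq_mul (obsCoeff j _), Pi.add_apply] at moment
  rw [moment]
  by_cases hjk : j = k <;> by_cases hjl : j = l <;> simp [obsCoeff, Pi.single_apply, hjk, hjl]

theorem stmt_12_general (v : Ω → ℝ) (ε : ι → Ω → ℝ)
    (hindep : iIndepFun (fun i : Option ι ↦ i.elim v ε) μ)
    (τsq : ℝ) (s : ι → ℝ) (hs : ∀ j, 0 < s j)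
    (hv4 : MemLp v 4 μ) (hε4 : ∀ j, MemLp (ε j) 4 μ)
    (hEv : ∫ ω, v ω ∂μ = 0) (hEvsq : ∫ ω, (v ω) ^ 2 ∂μ = τsq)
    (hEε : ∀ j, ∫ ω, ε j ω ∂μ = 0) (hEεsq : ∀ j, ∫ ω, (ε j ω) ^ 2 ∂μ = s j)
    (κv : ℝ) (κε : ι → ℝ) (hEv4 : ∫ ω, (v ω) ^ 4 ∂μ = κv * τsq ^ 2)
    (hEε4 : ∀ j, ∫ ω, (ε j ω) ^ 4 ∂μ = κε j * (s j) ^ 2)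
    (η : ℝ) (hη : η = 1 + τsq * ∑ h, (s h)⁻¹)
    (lam : ι → ℝ) (hlam : ∀ j, lam j = τsq * (s j)⁻¹ * η⁻¹)
    (w : Ω → ℝ) (hw : ∀ ω, w ω = (∑ h, lam h - 1) * v ω + ∑ h, lam h * ε h ω) (j k : ι) :
    ∫ ω, (v ω + ε j ω) * (v ω + ε k ω) ^ 2 * w ω ∂μ
      = τsq * η⁻¹ * (τsq * (3 - κv) + s j * (κε j - 3) * (if j = k then 1 else 0)) := by
  let X : Option ι → Ω → ℝ := fun i ↦ i.elim v ε
  let q : Option ι → ℝ := fun i ↦ i.elim (-η⁻¹) lam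
  have hX : ∀ i, MemLp (X i) 4 μ := Option.rec hv4 hε4
  have hX0 : ∀ i, μ[X i] = 0 := Option.rec hEv hEε
  have hη0 : η ≠ 0 := by
    have hτ : 0 ≤ τsq := hEvsq ▸ integral_nonneg fun ω ↦ sq_nonneg (v ω)
    exact hη ▸ (one_add_mul_sum_inv_pos hτ fun h ↦ (hs h).le).ne'
  have lam_mul (m : ι) : lam m * s m = τsq * η⁻¹ := by
    rw [hlam, mul_right_comm, inv_mul_cancel_right₀ (hs m).ne']
  have hwq : w = ∑ i, q i • X i := by
    have hlam_sum : ∑ h, lam h - 1 = -η⁻¹ := by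
      simpa only [hlam] using sum_shrinkage_sub_one hη hη0
    ext ω
    simp [hw, hlam_sum, Fintype.sum_option, q, X]
  have var_v : Var[v; μ] = τsq := (variance_of_integral_eq_zero hv4.aemeasurable hEv).trans hEvsq
  have var_ε (m : ι) : Var[ε m; μ] = s m :=
    (variance_of_integral_eq_zero (hε4 m).aemeasurable (hEε m)).trans (hEεsq m)
  have orthogonal (m : ι) : q none * Var[X none; μ] + q (some m) * Var[X (some m); μ] = 0 := by
    simp only [X, q, Option.elim_none, Option.elim_some, var_v, var_ε, lam_mul]
    ring
  have cumulant_v := jointCumulant₄_self_of_moments hv4.aemeasurable hEv hEvsq hEv4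
  have cumulant_ε :=
    jointCumulant₄_self_of_moments (hε4 j).aemeasurable (hEε j) (hEεsq j) (hEε4 j)
  have moment := integral_obs_mul_obs_mul_obs_mul_sum_smul hindep hX hX0 orthogonal j k k
  simp only [and_self, ← hwq, X, q, Option.elim_none, Option.elim_some, cumulant_v, cumulant_ε]
    at moment
  simp only [pow_two (v _ + ε k _), ← mul_assoc, moment]
  split_ifs
  · linear_combination (κε j - 3) * s j * lam_mul j
  · ring

end Cluster

/-- In the one-cluster model with finite fourth moments,
`E[(v+ε_j)(v+ε_k)² w] = τ² η⁻¹ [τ² (3 − κ_v) + σ_j² (κ_ε − 3) 1{j=k}]`,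
where `w = (∑ λ_h − 1) v + ∑ λ_h ε_h`. -/
theorem stmt_12 {Ω : Type*} [MeasurableSpace Ω] (μ : Measure Ω) [IsProbabilityMeasure μ]
    (n : ℕ) (hn : 1 ≤ n) (v : Ω → ℝ) (ε : Fin n → Ω → ℝ)
    (hv : Measurable v) (hε : ∀ j, Measurable (ε j))
    (hindep : iIndepFun (m := fun _ : Option (Fin n) => (inferInstance : MeasurableSpace ℝ))
      (fun i => Option.elim i v ε) μ)
    (τsq : ℝ) (hτ : 0 ≤ τsq) (s : Fin n → ℝ) (hs : ∀ j, 0 < s j)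
    (hv4 : MemLp v 4 μ) (hε4 : ∀ j, MemLp (ε j) 4 μ)
    (hEv : ∫ ω, v ω ∂μ = 0) (hEvsq : ∫ ω, (v ω) ^ 2 ∂μ = τsq)
    (hEε : ∀ j, ∫ ω, ε j ω ∂μ = 0) (hEεsq : ∀ j, ∫ ω, (ε j ω) ^ 2 ∂μ = s j)
    (hEv3 : ∫ ω, (v ω) ^ 3 ∂μ = 0) (hEε3 : ∀ j, ∫ ω, (ε j ω) ^ 3 ∂μ = 0)
    (κv κε : ℝ) (hEv4 : ∫ ω, (v ω) ^ 4 ∂μ = κv * τsq ^ 2)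
    (hEε4 : ∀ j, ∫ ω, (ε j ω) ^ 4 ∂μ = κε * (s j) ^ 2)
    (η : ℝ) (hη : η = 1 + τsq * ∑ h, (s h)⁻¹)
    (lam : Fin n → ℝ) (hlam : ∀ j, lam j = τsq * (s j)⁻¹ * η⁻¹)
    (w : Ω → ℝ) (hw : ∀ ω, w ω = (∑ h, lam h - 1) * v ω + ∑ h, lam h * ε h ω) :
    ∀ j k, ∫ ω, (v ω + ε j ω) * (v ω + ε k ω) ^ 2 * w ω ∂μ
      = τsq * η⁻¹ * (τsq * (3 - κv)
          + s j * (κε - 3) * (if j = k then 1 else 0)) :=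
  stmt_12_general v ε hindep τsq s hs hv4 hε4 hEv hEvsq hEε hEεsq κv (fun _ ↦ κε) hEv4 hEε4
    η hη lam hlam w hw
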